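/- arXiv:2508.17403 — 2 statements merged into one kernel-verified Lean document; each statement's English description precedes it below -/
import Mathlib

section
/- Let α be a type with decidable equality and let n ≥ 2. If s, s' : Fin n → α are two samples that differ in exactly one index (s i = s' i for all but one i), then the plug-in entropy estimators satisfy |Ĥ(s) − Ĥ(s')| ≤ 2 · log n / n. -/
open Finset

/-- The plug-in (maximum-likelihood) entropy estimator of the empirical
distribution of a finite sample `s : Fin n → α`, using the natural logarithm
and the convention `0 * log 0 = 0` (terms outside the image of `s` vanish). -/
noncomputable def empEntropy {α : Type*} [DecidableEq α] {n : ℕ} (s : Fin n → α) : ℝ :=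
  -∑ a ∈ Finset.image s Finset.univ,
      (((Finset.univ.filter fun i => s i = a).card : ℝ) / n) *
        Real.log (((Finset.univ.filter fun i => s i = a).card : ℝ) / n)

/-- The increment of `x ↦ x * log x` between consecutive naturals is nonnegative. -/
lemma mul_log_increment_nonneg (t : ℕ) :
    0 ≤ ((t : ℝ) + 1) * Real.log (t + 1) - t * Real.log t := by
  rcases Nat.eq_zero_or_pos t with rfl | ht
  · simp
  have ht' : (1 : ℝ) ≤ t := by exact_mod_cast ht
  have hlog : Real.log t ≤ Real.log (t + 1) := Real.log_le_log (by linarith) (by linarith)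
  have hnonneg : 0 ≤ Real.log t := Real.log_nonneg ht'
  nlinarith

lemma mul_log_increment_le (t : ℕ) :
    ((t : ℝ) + 1) * Real.log (t + 1) - t * Real.log t ≤ 2 * Real.log (t + 1) := by
  rcases Nat.lt_or_ge t 2 with ht | ht
  · interval_cases t <;> norm_num
  have ht' : (2 : ℝ) ≤ t := by exact_mod_cast ht
  have hpos : (0 : ℝ) < t := by linarith
  have hstep : t * (Real.log (t + 1) - Real.log t) ≤ 1 := by
    rw [← Real.log_div (by positivity) (by positivity)]
    calc (t : ℝ) * Real.log ((t + 1) / t) ≤ t * ((t + 1) / t - 1) := by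
          gcongr
          exact Real.log_le_sub_one_of_pos (by positivity)
      _ = 1 := by field_simp; ring
  have hone : 1 ≤ Real.log (t + 1) := by
    rw [Real.le_log_iff_exp_le (by positivity)]
    linarith [Real.exp_one_lt_d9]
  linarith

/-- The plug-in entropy in terms of the counts, summed over any finite set of categories
containing all the observed ones. -/
lemma empEntropy_eq_log_sub {α : Type*} [DecidableEq α] {n : ℕ} (hn : n ≠ 0) (s : Fin n → α)
    {S : Finset α} (hS : image s univ ⊆ S) :
    empEntropy s = Real.log n -
      (∑ a ∈ S, (#{i | s i = a} : ℝ) * Real.log #{i | s i = a}) / n := by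
  have hn' : (n : ℝ) ≠ 0 := by exact_mod_cast hn
  have hzero : ∀ a ∈ S, a ∉ image s univ → #{i | s i = a} = 0 := by
    intro a _ ha
    simpa [filter_eq_empty_iff] using ha
  have hcount : ∑ a ∈ S, (#{i | s i = a} : ℝ) = n := by
    have h := card_eq_sum_card_fiberwise (s := univ) (t := S) (f := s)
      (fun i _ => hS (mem_image_of_mem s (mem_univ i)))
    rw [card_univ, Fintype.card_fin] at h
    exact_mod_cast h.symm
  have hterm : ∀ c : ℕ, (c : ℝ) / n * Real.log (c / n) =
      c * Real.log c / n - c * (Real.log n / n) := by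
    intro c
    rcases Nat.eq_zero_or_pos c with rfl | hc
    · simp
    rw [Real.log_div (by positivity) hn']
    ring
  rw [empEntropy, sum_subset hS fun a ha ha' => by simp [hzero a ha ha']]
  simp_rw [hterm]
  rw [sum_sub_distrib, ← sum_mul, ← sum_div, hcount]
  field_simp
  ring

/-- Splitting off the observation `j` from the sum of `c * log c` over the counts. -/
lemma sum_count_mul_log_eq {α : Type*} [DecidableEq α] {n : ℕ} (s : Fin n → α) (j : Fin n)
    {S : Finset α} (hj : s j ∈ S) (t : α → ℕ) (ht : ∀ a, t a = #{i | i ≠ j ∧ s i = a}) :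
    ∑ a ∈ S, (#{i | s i = a} : ℝ) * Real.log #{i | s i = a} =
      ∑ a ∈ S, (t a : ℝ) * Real.log (t a) +
        (((t (s j) : ℝ) + 1) * Real.log (t (s j) + 1) - t (s j) * Real.log (t (s j))) := by
  have hcount : ∀ a, #{i | s i = a} = t a + if s j = a then 1 else 0 := by
    intro a
    rw [ht]
    split_ifs with h
    · rw [← card_insert_of_notMem (a := j) (by simp)]
      congr 1
      ext i
      by_cases hi : i = j <;> simp [hi, h]
    · rw [add_zero]
      congr 1
      ext i
      by_cases hi : i = j <;> simp [hi, h]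
  have hterm : ∀ a, (#{i | s i = a} : ℝ) * Real.log #{i | s i = a} = t a * Real.log (t a) +
      if s j = a then ((t a : ℝ) + 1) * Real.log (t a + 1) - t a * Real.log (t a) else 0 := by
    intro a
    rw [hcount]
    split_ifs <;> simp
  simp_rw [hterm]
  rw [sum_add_distrib, sum_ite_eq, if_pos hj]

/-- Bounded-difference property of the plug-in entropy estimator under the
replacement of a single observation. -/
theorem empEntropy_bounded_difference {α : Type*} [DecidableEq α] {n : ℕ} (hn : 2 ≤ n)
    (s s' : Fin n → α) (j : Fin n) (hdiff : ∀ i : Fin n, i ≠ j → s i = s' i) :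
    |empEntropy s - empEntropy s'| ≤ 2 * Real.log n / n := by
  let t : α → ℕ := fun a => #{i | i ≠ j ∧ s i = a}
  have ht' : ∀ a, t a = #{i | i ≠ j ∧ s' i = a} := by
    intro a
    refine congrArg card (filter_congr fun i _ => and_congr_right fun hi => ?_)
    rw [hdiff i hi]
  have hbound : ∀ a, ((t a : ℝ) + 1) * Real.log (t a + 1) - t a * Real.log (t a) ≤
      2 * Real.log n := by
    intro a
    have hlt : t a < n := by
      have h : t a < #(univ : Finset (Fin n)) :=
        card_lt_card (filter_ssubset.2 ⟨j, mem_univ j, by simp⟩)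
      simpa using h
    have hle : (t a : ℝ) + 1 ≤ n := by exact_mod_cast hlt
    refine (mul_log_increment_le _).trans ?_
    gcongr
  have hn0 : n ≠ 0 := by lia
  have hS : image s univ ⊆ image s univ ∪ image s' univ := subset_union_left
  have hS' : image s' univ ⊆ image s univ ∪ image s' univ := subset_union_right
  rw [empEntropy_eq_log_sub hn0 s hS, empEntropy_eq_log_sub hn0 s' hS',
    sum_count_mul_log_eq s j (hS (mem_image_of_mem s (mem_univ j))) t fun _ => rfl,
    sum_count_mul_log_eq s' j (hS' (mem_image_of_mem s' (mem_univ j))) t ht',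
    sub_sub_sub_cancel_left, ← sub_div, abs_div, Nat.abs_cast, add_sub_add_left_eq_sub]
  gcongr
  rw [abs_le]
  constructor <;>
    linarith [hbound (s j), hbound (s' j), mul_log_increment_nonneg (t (s j)),
      mul_log_increment_nonneg (t (s' j))]
end

section
/- Let α be a finite type, β a type with decidable equality, f : α → β, and let (X_1, …, X_n) be random elements of α on a probability space, with Y_i = f(X_i) for each i, so the paired sample is S = (i ↦ (X_i, Y_i)). Let Î_n = Ĥ(X-sample) + Ĥ(Y-sample) − Ĥ(S) be the plug-in mutual information estimator, let Ĥ_n(Y) be the plug-in entropy estimator of the Y-sample, let q be the distribution of f(X_1) and H(q) its Shannon entropy, and let I = H(q) be the true mutual information of (X_1, f(X_1)). Then the bias of the mutual information estimator equals the bias of the output-entropy estimator: E[Î_n] − I = E[Ĥ_n(Y)] − H(q). -/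
open MeasureTheory Finset

/-- The plug-in (maximum-likelihood) mutual information estimator of a paired
sample `S : Fin n → α × β`. -/
noncomputable def empMI {α β : Type*} [DecidableEq α] [DecidableEq β] {n : ℕ}
    (S : Fin n → α × β) : ℝ :=
  empEntropy (fun i => (S i).1) + empEntropy (fun i => (S i).2) - empEntropy S

/-- The Shannon entropy of a finitely supported probability mass function
`q : γ → ℝ`, with the convention `0 * log 0 = 0`. -/
noncomputable def shannonEntropy {γ : Type*} (q : γ → ℝ) : ℝ :=
  -∑ᶠ c, q c * Real.log (q c)

/-- The plug-in entropy is invariant under relabelling the sample by an injective map. -/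
theorem empEntropy_comp_of_injective {α γ : Type*} [DecidableEq α] [DecidableEq γ] {n : ℕ}
    {g : α → γ} (hg : Function.Injective g) (s : Fin n → α) :
    empEntropy (fun i => g (s i)) = empEntropy s := by
  have himage : Finset.image (fun i => g (s i)) Finset.univ =
      (Finset.image s Finset.univ).image g := by
    rw [Finset.image_image]; rfl
  simp only [empEntropy, himage, Finset.sum_image hg.injOn, hg.eq_iff]

/-- For a noise-free paired sample, the plug-in mutual information is the plug-in entropy of the
output sample. -/
theorem empMI_graph {α β : Type*} [DecidableEq α] [DecidableEq β] {n : ℕ}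
    (f : α → β) (x : Fin n → α) :
    empMI (fun i => (x i, f (x i))) = empEntropy (fun i => f (x i)) := by
  have hg : Function.Injective fun a => (a, f a) := fun _ _ h => congrArg Prod.fst h
  simp only [empMI, empEntropy_comp_of_injective hg x, add_sub_cancel_left]

/-- For a noise-free mapping `Y_i = f (X_i)`, the bias of the plug-in mutual
information estimator equals the bias of the plug-in output-entropy estimator:
`E[Î_n] − I = E[Ĥ_n(Y)] − H(q)`, where `q` is the distribution of `f (X_1)` and
`I = H(q)` is the true mutual information of `(X_1, f (X_1))`. -/
theorem empMI_bias_eq_empEntropy_bias {α β : Type*} [Fintype α] [DecidableEq α]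
    [DecidableEq β] {Ω : Type*} [MeasurableSpace Ω] (μ : Measure Ω)
    [IsProbabilityMeasure μ] {n : ℕ} (hn : 1 ≤ n)
    (f : α → β) (X : Fin n → Ω → α)
    (q : β → ℝ) (hq : ∀ b, q b = (μ {ω | f (X ⟨0, hn⟩ ω) = b}).toReal)
    (I : ℝ) (hI : I = shannonEntropy q) :
    (∫ ω, empMI (fun i => (X i ω, f (X i ω))) ∂μ) - I =
      (∫ ω, empEntropy (fun i => f (X i ω)) ∂μ) - shannonEntropy q := by
  simp only [empMI_graph, hI]
end
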